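/- Transfer of almost-sure truth: Fix a finite relational vocabulary τ without equality and a finite algebra A ⊆ [0,1] closed under the truth functions. An MD-sentence ⟨φ₁,…,φ_m; S⟩, where each φ_i is a first-order sentence and S ⊆ A^m, is almost surely true on A-valued models with finite domains if and only if the classical sentence ⋁_{(a₁,…,a_m) ∈ S} (T^{a₁}(φ₁) ∧ … ∧ T^{a_m}(φ_m)) is almost surely true on the finite classical models of Σ (i.e., the fraction, among τ*-structures with domain {1,…,n} satisfying Σ, of those satisfying the sentence tends to 1 as n → ∞). -/

import Mathlib

/-! Statement 11: Transfer of almost-sure truth through the classical translation (Proposition 5.3). -/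

open Classical

noncomputable section

instance : Fact ((0:ℝ) ≤ 1) := ⟨zero_le_one⟩

/-- The real unit interval, as the set of truth values. -/
abbrev UI : Type := unitInterval

/-- A relational vocabulary: a type of predicate symbols with arities. -/
structure Vocab : Type 1 where
  Pred : Type
  arity : Pred → ℕ

/-- A family of (propositional) connectives with arities. -/
structure Conns : Type 1 where
  Conn : Type
  carity : Conn → ℕ

/-- A real-valued logic: a truth function for each connective. -/
def TruthFns (C : Conns) : Type := ∀ c : C.Conn, (Fin (C.carity c) → UI) → UI

/-- First-order formulas over the vocabulary `V` and connectives `C`,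
with variables named by natural numbers. -/
inductive Formula (V : Vocab) (C : Conns) : Type
  | pred (P : V.Pred) (v : Fin (V.arity P) → ℕ) : Formula V C
  | conn (c : C.Conn) (args : Fin (C.carity c) → Formula V C) : Formula V C
  | all (y : ℕ) (φ : Formula V C) : Formula V C
  | ex (y : ℕ) (φ : Formula V C) : Formula V C

/-- A real-valued first-order model with domain `M`. -/
structure Model (V : Vocab) (M : Type) where
  interp : ∀ P : V.Pred, (Fin (V.arity P) → M) → UI

variable {V : Vocab} {C : Conns} {M : Type}

/-- The truth value of a formula at a valuation `ν : ℕ → M`: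
connectives are computed by their truth functions, `∀` by infimum over the
domain and `∃` by supremum over the domain. -/
def eval (truth : TruthFns C) (𝔐 : Model V M) : Formula V C → (ℕ → M) → UI
  | .pred P v => fun ν => 𝔐.interp P fun i => ν (v i)
  | .conn c args => fun ν => truth c fun i => eval truth 𝔐 (args i) ν
  | .all y φ => fun ν => ⨅ e : M, eval truth 𝔐 φ (Function.update ν y e)
  | .ex y φ => fun ν => ⨆ e : M, eval truth 𝔐 φ (Function.update ν y e)

/-- A multi-dimensional sentence over the domain `M`: a finite sequence of
component formulas together with an information set `S` of tuples of
interpretations. -/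
structure MDSentence (V : Vocab) (C : Conns) (M : Type) where
  k : ℕ
  comps : Fin k → Formula V C
  S : Set (Fin k → (ℕ → M) → UI)

/-- Satisfaction: the tuple of interpretations of the components lies in `S`. -/
def Sat (truth : TruthFns C) (𝔐 : Model V M) (σ : MDSentence V C M) : Prop :=
  (fun i => eval truth 𝔐 (σ.comps i)) ∈ σ.S

/-- A tuple is *good* for the components `comps` if it respects the semantics
of the connectives and quantifiers wherever the immediate subformulas of a
component also occur among the components. -/
def GoodTuple (truth : TruthFns C) {k : ℕ} (comps : Fin k → Formula V C)
    (f : Fin k → (ℕ → M) → UI) : Prop :=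
  (∀ (m : Fin k) (c : C.Conn) (args : Fin (C.carity c) → Formula V C)
      (g : Fin (C.carity c) → Fin k),
      comps m = .conn c args → (∀ j, comps (g j) = args j) →
      f m = fun ν => truth c fun j => f (g j) ν) ∧
  (∀ (i j : Fin k) (y : ℕ) (φ : Formula V C), comps i = .all y φ → comps j = φ →
      f i = fun ν => ⨅ e : M, f j (Function.update ν y e)) ∧
  (∀ (i j : Fin k) (y : ℕ) (φ : Formula V C), comps i = .ex y φ → comps j = φ →
      f i = fun ν => ⨆ e : M, f j (Function.update ν y e))

/-- The variable `x` occurs free in a formula. -/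
def FreeIn {V : Vocab} {C : Conns} : ℕ → Formula V C → Prop
  | x, .pred _ v => ∃ i, v i = x
  | x, .conn _ args => ∃ i, FreeIn x (args i)
  | x, .all y φ => x ≠ y ∧ FreeIn x φ
  | x, .ex y φ => x ≠ y ∧ FreeIn x φ

/-- A sentence is a formula with no free variables. -/
def IsSentence {V : Vocab} {C : Conns} (φ : Formula V C) : Prop :=
  ∀ x, ¬ FreeIn x φ

/-- Classical first-order formulas over the starred vocabulary `τ*`, which has
a predicate `P^a` for each predicate `P` of `τ` and each truth value `a ∈ A`,
with finite conjunctions and disjunctions (given by lists), negation and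
quantifiers. -/
inductive CFormula (V : Vocab) (A : Finset UI) : Type
  | pred (P : V.Pred) (a : ↥A) (v : Fin (V.arity P) → ℕ) : CFormula V A
  | ands (l : List (CFormula V A)) : CFormula V A
  | ors (l : List (CFormula V A)) : CFormula V A
  | not (φ : CFormula V A) : CFormula V A
  | call (y : ℕ) (φ : CFormula V A) : CFormula V A
  | cex (y : ℕ) (φ : CFormula V A) : CFormula V A

/-- A classical structure for the starred vocabulary `τ*`. -/
structure CModel (V : Vocab) (A : Finset UI) (M : Type) where
  interp : ∀ P : V.Pred, ↥A → (Fin (V.arity P) → M) → Prop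

/-- Classical (two-valued) satisfaction of starred formulas. -/
def csat {V : Vocab} {A : Finset UI} {M : Type} (𝔑 : CModel V A M) :
    CFormula V A → (ℕ → M) → Prop
  | .pred P a v => fun ν => 𝔑.interp P a fun i => ν (v i)
  | .ands l => fun ν => ∀ ψ ∈ l.attach, csat 𝔑 ψ.1 ν
  | .ors l => fun ν => ∃ ψ ∈ l.attach, csat 𝔑 ψ.1 ν
  | .not φ => fun ν => ¬ csat 𝔑 φ ν
  | .call y φ => fun ν => ∀ e : M, csat 𝔑 φ (Function.update ν y e)
  | .cex y φ => fun ν => ∃ e : M, csat 𝔑 φ (Function.update ν y e)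
decreasing_by
  all_goals simp_wf
  all_goals first
    | (have h := List.sizeOf_lt_of_mem ψ.2; omega)
    | omega

/-- The translation `T^a` of a many-valued formula into a classical starred
formula: `T^a(P x̄) = P^a x̄`; `T^a(∘(ψ₁,…,ψ_n))` is the disjunction over all
tuples `b ∈ A^n` with `∘(b₁,…,b_n) = a` of the conjunctions `⋀ᵢ T^{bᵢ}(ψᵢ)`;
for the quantifiers, a disjunction over all tuples `b₁,…,b_k ∈ A`
(`1 ≤ k ≤ |A|`) whose max (resp. min) is `a` of `⋀ᵢ ∃x T^{bᵢ}(ψ)`, in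
conjunction with `∀x ⋁_{b ≤ a} T^b(ψ)` (resp. `∀x ⋁_{b ≥ a} T^b(ψ)`); the
last conjunct is the paper's `∀y ⋁_b T^b(ψ(y/x))` up to α-equivalence. -/
def transl {V : Vocab} {C : Conns} (truth : TruthFns C) (A : Finset UI) :
    Formula V C → ↥A → CFormula V A
  | .pred P v => fun a => .pred P a v
  | .conn c args => fun a =>
      .ors (((Finset.univ.filter
          (fun b : Fin (C.carity c) → ↥A =>
            truth c (fun i => (b i : UI)) = (a : UI))).toList.map
        (fun b => CFormula.ands
          (List.ofFn fun i => transl truth A (args i) (b i)))))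
  | .ex y φ => fun a =>
      .ands [
        .ors ((List.range A.card).flatMap (fun m =>
          ((Finset.univ.filter
              (fun b : Fin (m+1) → ↥A => (⨆ i, (b i : UI)) = (a : UI))).toList.map
            (fun b => CFormula.ands
              (List.ofFn fun i : Fin (m+1) =>
                CFormula.cex y (transl truth A φ (b i))))))),
        .call y (.ors ((Finset.univ.filter
            (fun b : ↥A => (b : UI) ≤ (a : UI))).toList.map
          (fun b => transl truth A φ b)))]
  | .all y φ => fun a =>
      .ands [
        .ors ((List.range A.card).flatMap (fun m =>
          ((Finset.univ.filter
              (fun b : Fin (m+1) → ↥A => (⨅ i, (b i : UI)) = (a : UI))).toList.map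
            (fun b => CFormula.ands
              (List.ofFn fun i : Fin (m+1) =>
                CFormula.cex y (transl truth A φ (b i))))))),
        .call y (.ors ((Finset.univ.filter
            (fun b : ↥A => (a : UI) ≤ (b : UI))).toList.map
          (fun b => transl truth A φ b)))]

/-- Universal closure over the variables `0, …, n-1`. -/
def foralls {V : Vocab} {A : Finset UI} : ℕ → CFormula V A → CFormula V A
  | 0, φ => φ
  | n + 1, φ => .call n (foralls n φ)

/-- The axiom of `Σ` saying that each tuple satisfies `P^a` for some
`a ∈ A`. -/
def totalAx {V : Vocab} (A : Finset UI) (P : V.Pred) : CFormula V A :=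
  foralls (V.arity P)
    (.ors ((Finset.univ : Finset ↥A).toList.map
      (fun a => CFormula.pred P a (fun i => (i : ℕ)))))

/-- The axiom of `Σ` saying that no tuple satisfies both `P^a` and `P^b` for
`a ≠ b`. -/
def exclAx {V : Vocab} (A : Finset UI) (P : V.Pred) (a b : ↥A) : CFormula V A :=
  foralls (V.arity P)
    (.not (.ands [CFormula.pred P a (fun i => (i : ℕ)),
                  CFormula.pred P b (fun i => (i : ℕ))]))

/-- The classical theory `Σ`. -/
def SigmaTheory (V : Vocab) (A : Finset UI) : Set (CFormula V A) :=
  {ψ | (∃ P : V.Pred, ψ = totalAx A P) ∨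
       (∃ (P : V.Pred) (a b : ↥A), a ≠ b ∧ ψ = exclAx A P a b)}

/-- A classical structure is a model of `Σ` when it satisfies every member of
`Σ` at every valuation. -/
def SatSigma {V : Vocab} {M : Type} (A : Finset UI) (𝔑 : CModel V A M) : Prop :=
  ∀ ψ ∈ SigmaTheory V A, ∀ ν : ℕ → M, csat 𝔑 ψ ν

/-- The classical structure `𝔐*` associated with a many-valued model `𝔐`:
`P^a` holds of a tuple iff `P` takes value `a` there. -/
def star {V : Vocab} {M : Type} (A : Finset UI) (𝔐 : Model V M) :
    CModel V A M :=
  ⟨fun P a t => 𝔐.interp P t = (a : UI)⟩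

/-- An `A`-valued model: each predicate is interpreted by a map into `A`. -/
def AModel (V : Vocab) (A : Finset UI) (M : Type) : Type :=
  ∀ P : V.Pred, (Fin (V.arity P) → M) → ↥A

/-- The real-valued model underlying an `A`-valued model. -/
def AModel.toModel {V : Vocab} {A : Finset UI} {M : Type}
    (𝔐 : AModel V A M) : Model V M :=
  ⟨fun P t => (𝔐 P t : UI)⟩

/-- Satisfaction of an MD-sentence `⟨φ₁, …, φ_m; S⟩` (components sentences,
`S ⊆ A^m`) in an `A`-valued model: the tuple of truth values of the
components lies in `S`. -/
def ASatVals {V : Vocab} {C : Conns} {A : Finset UI} {M : Type}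
    (truth : TruthFns C) (𝔐 : AModel V A M) {m : ℕ}
    (φ : Fin m → Formula V C) (S : Set (Fin m → ↥A)) : Prop :=
  ∃ v ∈ S, ∀ (i : Fin m) (ν : ℕ → M),
    eval truth 𝔐.toModel (φ i) ν = (v i : UI)

/-!
An `A`-valued model and its classical counterpart `𝔐*` carry the same information: the axioms of
`Σ` say that each tuple of each predicate receives exactly one value in `A`, so `𝔐 ↦ 𝔐*` is a
bijection from the `A`-valued models onto the models of `Σ` on the same nonempty domain. By
induction on `φ`, the translation `T^a(φ)` holds in `𝔐*` exactly when `φ` takes the value `a` in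
`𝔐`; the quantifier steps work because suprema and infima of values in the finite set `A` are
attained. Hence the two fractions agree on every nonempty finite domain, and so do their limits.
-/

variable {A : Finset UI}

section AttainedBounds

variable {ι α : Type*} [CompleteLinearOrder α] [Nonempty ι] {s : Finset α} {f : ι → α}

theorem exists_eq_iSup_of_forall_mem (hf : ∀ i, f i ∈ s) : ∃ i, f i = ⨆ i, f i :=
  (Set.range_nonempty f).csSup_mem (s.finite_toSet.subset (Set.range_subset_iff.2 hf))

theorem exists_eq_iInf_of_forall_mem (hf : ∀ i, f i ∈ s) : ∃ i, f i = ⨅ i, f i :=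
  (Set.range_nonempty f).csInf_mem (s.finite_toSet.subset (Set.range_subset_iff.2 hf))

theorem iSup_mem_of_forall_mem (hf : ∀ i, f i ∈ s) : (⨆ i, f i) ∈ s := by
  obtain ⟨i, hi⟩ := exists_eq_iSup_of_forall_mem hf
  exact hi ▸ hf i

theorem iInf_mem_of_forall_mem (hf : ∀ i, f i ∈ s) : (⨅ i, f i) ∈ s := by
  obtain ⟨i, hi⟩ := exists_eq_iInf_of_forall_mem hf
  exact hi ▸ hf i

-- A single attained value already witnesses the first conjunct, so the case `m = 0` suffices.
theorem iSup_eq_coe_iff (hf : ∀ i, f i ∈ s) (a : s) :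
    (⨆ i, f i) = a ↔
      (∃ m < s.card, ∃ b : Fin (m + 1) → s, (⨆ j, (b j : α)) = a ∧ ∀ j, ∃ i, f i = b j) ∧
        ∀ i, ∃ b : s, (b : α) ≤ a ∧ f i = b := by
  constructor
  · intro h
    obtain ⟨i, hi⟩ := exists_eq_iSup_of_forall_mem hf
    exact ⟨⟨0, Finset.card_pos.2 ⟨a, a.2⟩, fun _ => a, ciSup_const, fun _ => ⟨i, hi.trans h⟩⟩,
      fun i => ⟨⟨f i, hf i⟩, h ▸ le_iSup f i, rfl⟩⟩
  · rintro ⟨⟨m, -, b, hb, hatt⟩, hle⟩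
    refine le_antisymm (iSup_le fun i => ?_) (hb ▸ iSup_le fun j => ?_)
    · obtain ⟨c, hc, hi⟩ := hle i
      exact hi.trans_le hc
    · obtain ⟨i, hi⟩ := hatt j
      exact hi ▸ le_iSup f i

theorem iInf_eq_coe_iff (hf : ∀ i, f i ∈ s) (a : s) :
    (⨅ i, f i) = a ↔
      (∃ m < s.card, ∃ b : Fin (m + 1) → s, (⨅ j, (b j : α)) = a ∧ ∀ j, ∃ i, f i = b j) ∧
        ∀ i, ∃ b : s, (a : α) ≤ b ∧ f i = b :=
  iSup_eq_coe_iff (α := αᵒᵈ) hf a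

end AttainedBounds

section ClassicalSatisfaction

variable (𝔑 : CModel V A M) (ν : ℕ → M)

@[simp]
theorem csat_pred (P : V.Pred) (a : A) (v : Fin (V.arity P) → ℕ) :
    csat 𝔑 (.pred P a v) ν ↔ 𝔑.interp P a fun i => ν (v i) := by
  rw [csat]

@[simp]
theorem csat_ands (l : List (CFormula V A)) :
    csat 𝔑 (.ands l) ν ↔ ∀ ψ ∈ l, csat 𝔑 ψ ν := by
  rw [csat]
  simp

@[simp]
theorem csat_ors (l : List (CFormula V A)) :
    csat 𝔑 (.ors l) ν ↔ ∃ ψ ∈ l, csat 𝔑 ψ ν := by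
  rw [csat]
  simp

@[simp]
theorem csat_not (ψ : CFormula V A) : csat 𝔑 (.not ψ) ν ↔ ¬ csat 𝔑 ψ ν := by
  rw [csat]

@[simp]
theorem csat_call (y : ℕ) (ψ : CFormula V A) :
    csat 𝔑 (.call y ψ) ν ↔ ∀ e, csat 𝔑 ψ (Function.update ν y e) := by
  rw [csat]

@[simp]
theorem csat_cex (y : ℕ) (ψ : CFormula V A) :
    csat 𝔑 (.cex y ψ) ν ↔ ∃ e, csat 𝔑 ψ (Function.update ν y e) := by
  rw [csat]

@[simp]
theorem csat_ands_pair (ψ χ : CFormula V A) :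
    csat 𝔑 (.ands [ψ, χ]) ν ↔ csat 𝔑 ψ ν ∧ csat 𝔑 χ ν := by
  simp only [csat_ands, List.mem_cons, List.not_mem_nil, or_false, forall_eq_or_imp, forall_eq]

@[simp]
theorem csat_ors_map {β : Type*} (l : List β) (f : β → CFormula V A) :
    csat 𝔑 (.ors (l.map f)) ν ↔ ∃ b ∈ l, csat 𝔑 (f b) ν := by
  simp only [csat_ors, List.mem_map, exists_exists_and_eq_and]

@[simp]
theorem csat_ors_flatMap {β : Type*} (l : List β) (f : β → List (CFormula V A)) :
    csat 𝔑 (.ors (l.flatMap f)) ν ↔ ∃ b ∈ l, csat 𝔑 (.ors (f b)) ν := by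
  simp only [csat_ors, List.mem_flatMap]
  grind

@[simp]
theorem csat_ands_ofFn {n : ℕ} (f : Fin n → CFormula V A) :
    csat 𝔑 (.ands (List.ofFn f)) ν ↔ ∀ i, csat 𝔑 (f i) ν := by
  rw [csat_ands, List.forall_mem_ofFn_iff]

theorem csat_transl_conn (truth : TruthFns C) (c : C.Conn)
    (args : Fin (C.carity c) → Formula V C) (a : A) :
    csat 𝔑 (transl truth A (.conn c args) a) ν ↔
      ∃ b : Fin (C.carity c) → A,
        truth c (fun i => (b i : UI)) = a ∧ ∀ i, csat 𝔑 (transl truth A (args i) (b i)) ν := by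
  simp only [transl, csat_ors_map, csat_ands_ofFn, Finset.mem_toList, Finset.mem_filter_univ]

theorem csat_transl_ex (truth : TruthFns C) (y : ℕ) (φ : Formula V C) (a : A) :
    csat 𝔑 (transl truth A (.ex y φ) a) ν ↔
      (∃ m < A.card, ∃ b : Fin (m + 1) → A, (⨆ i, (b i : UI)) = a ∧
        ∀ i, ∃ e, csat 𝔑 (transl truth A φ (b i)) (Function.update ν y e)) ∧
      ∀ e, ∃ b : A, (b : UI) ≤ a ∧ csat 𝔑 (transl truth A φ b) (Function.update ν y e) := by
  simp only [transl, csat_ands_pair, csat_ors_flatMap, csat_ors_map, csat_ands_ofFn, csat_cex,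
    csat_call, List.mem_range, Finset.mem_toList, Finset.mem_filter_univ]

theorem csat_transl_all (truth : TruthFns C) (y : ℕ) (φ : Formula V C) (a : A) :
    csat 𝔑 (transl truth A (.all y φ) a) ν ↔
      (∃ m < A.card, ∃ b : Fin (m + 1) → A, (⨅ i, (b i : UI)) = a ∧
        ∀ i, ∃ e, csat 𝔑 (transl truth A φ (b i)) (Function.update ν y e)) ∧
      ∀ e, ∃ b : A, (a : UI) ≤ b ∧ csat 𝔑 (transl truth A φ b) (Function.update ν y e) := by
  simp only [transl, csat_ands_pair, csat_ors_flatMap, csat_ors_map, csat_ands_ofFn, csat_cex,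
    csat_call, List.mem_range, Finset.mem_toList, Finset.mem_filter_univ]

end ClassicalSatisfaction

section ManyValuedEvaluation

variable {truth : TruthFns C}

/-- The set `A` of truth values is closed under the truth functions of the logic. -/
def ClosedUnder (truth : TruthFns C) (A : Finset UI) : Prop :=
  ∀ (c : C.Conn) (b : Fin (C.carity c) → UI), (∀ i, b i ∈ A) → truth c b ∈ A

theorem eval_mem (hA : ClosedUnder truth A) (𝔐 : AModel V A M) (φ : Formula V C) (ν : ℕ → M) :
    eval truth 𝔐.toModel φ ν ∈ A := by
  have : Nonempty M := ⟨ν 0⟩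
  induction φ generalizing ν with
  | pred P v => exact (𝔐 P _).2
  | conn c args ih => exact hA c _ fun i => ih i ν
  | all y φ ih => exact iInf_mem_of_forall_mem fun e => ih (Function.update ν y e)
  | ex y φ ih => exact iSup_mem_of_forall_mem fun e => ih (Function.update ν y e)

theorem csat_star_transl_iff (hA : ClosedUnder truth A) (𝔐 : AModel V A M) (φ : Formula V C)
    (a : A) (ν : ℕ → M) :
    csat (star A 𝔐.toModel) (transl truth A φ a) ν ↔ eval truth 𝔐.toModel φ ν = a := by
  have : Nonempty M := ⟨ν 0⟩
  induction φ generalizing a ν with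
  | pred P v => rw [transl, csat_pred]; rfl
  | conn c args ih =>
    simp only [csat_transl_conn, ih, eval]
    constructor
    · rintro ⟨b, hb, hargs⟩
      simpa only [hargs] using hb
    · exact fun h => ⟨fun i => ⟨_, eval_mem hA 𝔐 (args i) ν⟩, h, fun _ => rfl⟩
  | all y φ ih =>
    simp only [csat_transl_all, ih, eval]
    exact (iInf_eq_coe_iff (fun e => eval_mem hA 𝔐 φ (Function.update ν y e)) a).symm
  | ex y φ ih =>
    simp only [csat_transl_ex, ih, eval]
    exact (iSup_eq_coe_iff (fun e => eval_mem hA 𝔐 φ (Function.update ν y e)) a).symm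

theorem update_eq_update_of_forall_ne {α β : Type*} [DecidableEq α] {p : α → Prop} {f g : α → β}
    {y : α} (h : ∀ x, x ≠ y ∧ p x → f x = g x) (e : β) (x : α) (hx : p x) :
    Function.update f y e x = Function.update g y e x := by
  obtain rfl | hxy := eq_or_ne x y
  · simp only [Function.update_self]
  · simp only [Function.update_of_ne hxy, h x ⟨hxy, hx⟩]

theorem eval_congr (𝔐 : Model V M) (φ : Formula V C) {ν ν' : ℕ → M}
    (h : ∀ x, FreeIn x φ → ν x = ν' x) : eval truth 𝔐 φ ν = eval truth 𝔐 φ ν' := by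
  induction φ generalizing ν ν' with
  | pred P v => exact congrArg (𝔐.interp P) (funext fun i => h _ ⟨i, rfl⟩)
  | conn c args ih => exact congrArg (truth c) (funext fun i => ih i fun x hx => h x ⟨i, hx⟩)
  | all y φ ih => exact iInf_congr fun e => ih (update_eq_update_of_forall_ne h e)
  | ex y φ ih => exact iSup_congr fun e => ih (update_eq_update_of_forall_ne h e)

theorem IsSentence.eval_eq {φ : Formula V C} (hφ : IsSentence φ) (𝔐 : Model V M)
    (ν ν' : ℕ → M) : eval truth 𝔐 φ ν = eval truth 𝔐 φ ν' :=
  eval_congr 𝔐 φ fun x hx => absurd hx (hφ x)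

end ManyValuedEvaluation

section ModelsOfSigma

theorem star_toModel_interp_iff (𝔐 : AModel V A M) (P : V.Pred) (a : A)
    (t : Fin (V.arity P) → M) : (star A 𝔐.toModel).interp P a t ↔ 𝔐 P t = a :=
  Subtype.ext_iff.symm

theorem forall_csat_foralls (𝔑 : CModel V A M) (n : ℕ) (ψ : CFormula V A) :
    (∀ ν, csat 𝔑 (foralls n ψ) ν) ↔ ∀ ν, csat 𝔑 ψ ν := by
  induction n with
  | zero => rfl
  | succ n ih =>
    rw [← ih]
    simp only [foralls, csat_call]
    exact ⟨fun h ν => by simpa using h ν (ν n), fun h ν e => h _⟩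

theorem forall_comp_finVal_iff [Nonempty M] {k : ℕ} {p : (Fin k → M) → Prop} :
    (∀ ν : ℕ → M, p fun i => ν i) ↔ ∀ t, p t :=
  (Fin.val_injective.surjective_comp_right (γ := M)).forall.symm

variable [Nonempty M]

theorem forall_csat_totalAx (𝔑 : CModel V A M) (P : V.Pred) :
    (∀ ν, csat 𝔑 (totalAx A P) ν) ↔ ∀ t, ∃ a, 𝔑.interp P a t := by
  rw [totalAx, forall_csat_foralls, ← forall_comp_finVal_iff]
  simp

theorem forall_csat_exclAx (𝔑 : CModel V A M) (P : V.Pred) (a b : A) :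
    (∀ ν, csat 𝔑 (exclAx A P a b) ν) ↔ ∀ t, ¬ (𝔑.interp P a t ∧ 𝔑.interp P b t) := by
  rw [exclAx, forall_csat_foralls, ← forall_comp_finVal_iff]
  simp

theorem satSigma_iff_existsUnique {𝔑 : CModel V A M} :
    SatSigma A 𝔑 ↔ ∀ P t, ∃! a, 𝔑.interp P a t := by
  constructor
  · refine fun h P t => existsUnique_of_exists_of_unique ?_ fun a b ha hb => ?_
    · exact (forall_csat_totalAx 𝔑 P).1 (h _ (.inl ⟨P, rfl⟩)) t
    · by_contra hab
      exact (forall_csat_exclAx 𝔑 P a b).1 (h _ (.inr ⟨P, a, b, hab, rfl⟩)) t ⟨ha, hb⟩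
  · rintro h ψ (⟨P, rfl⟩ | ⟨P, a, b, hab, rfl⟩)
    · exact (forall_csat_totalAx 𝔑 P).2 fun t => (h P t).exists
    · exact (forall_csat_exclAx 𝔑 P a b).2 fun t ht => hab ((h P t).unique ht.1 ht.2)

theorem satSigma_star (𝔐 : AModel V A M) : SatSigma A (star A 𝔐.toModel) :=
  satSigma_iff_existsUnique.2 fun P t => by
    simp only [star_toModel_interp_iff, existsUnique_eq']

/-- The correspondence `𝔐 ↦ 𝔐*` between `A`-valued models and classical models of `Σ`. -/
def starEquiv : AModel V A M ≃ {𝔑 : CModel V A M // SatSigma A 𝔑} where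
  toFun 𝔐 := ⟨star A 𝔐.toModel, satSigma_star 𝔐⟩
  invFun 𝔑 := fun P t => (satSigma_iff_existsUnique.1 𝔑.2 P t).choose
  left_inv 𝔐 := by
    funext P t
    have h := satSigma_iff_existsUnique.1 (satSigma_star 𝔐) P t
    exact ((star_toModel_interp_iff 𝔐 P _ t).1 h.choose_spec.1).symm
  right_inv 𝔑 := by
    refine Subtype.ext (congrArg CModel.mk ?_)
    funext P a t
    have h := satSigma_iff_existsUnique.1 𝔑.2 P t
    exact propext ((star_toModel_interp_iff _ P a t).trans
      ⟨fun ha => ha ▸ h.choose_spec.1, fun ha => (h.choose_spec.2 a ha).symm⟩)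

end ModelsOfSigma

section Transfer

variable {truth : TruthFns C} {m : ℕ} {φ : Fin m → Formula V C}

/-- The classical sentence `⋁_{(a₁,…,a_m) ∈ S} (T^{a₁}(φ₁) ∧ … ∧ T^{a_m}(φ_m))` translating the
MD-sentence `⟨φ₁,…,φ_m; S⟩`. -/
def mdTransl (truth : TruthFns C) (φ : Fin m → Formula V C) (S : Set (Fin m → A)) :
    CFormula V A :=
  .ors ((Set.toFinite S).toFinset.toList.map fun v =>
    .ands (List.ofFn fun i => transl truth A (φ i) (v i)))

theorem csat_mdTransl (𝔑 : CModel V A M) (S : Set (Fin m → A)) (ν : ℕ → M) :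
    csat 𝔑 (mdTransl truth φ S) ν ↔ ∃ v ∈ S, ∀ i, csat 𝔑 (transl truth A (φ i) (v i)) ν := by
  simp only [mdTransl, csat_ors_map, csat_ands_ofFn, Finset.mem_toList, Set.Finite.mem_toFinset]

variable [Nonempty M]

-- The disjunct true in `𝔐*` could vary with the valuation; it does not, since the `φ i` are
-- sentences.
theorem aSatVals_iff_csat_mdTransl (hA : ClosedUnder truth A) (hφ : ∀ i, IsSentence (φ i))
    (S : Set (Fin m → A)) (𝔐 : AModel V A M) :
    ASatVals truth 𝔐 φ S ↔ ∀ ν, csat (star A 𝔐.toModel) (mdTransl truth φ S) ν := by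
  simp only [csat_mdTransl, csat_star_transl_iff hA]
  constructor
  · rintro ⟨v, hv, h⟩ ν
    exact ⟨v, hv, fun i => h i ν⟩
  · intro h
    let ν₀ : ℕ → M := Classical.arbitrary _
    obtain ⟨v, hv, hν₀⟩ := h ν₀
    exact ⟨v, hv, fun i ν => ((hφ i).eval_eq _ ν ν₀).trans (hν₀ i)⟩

/-- `starEquiv` restricted to the models of an MD-sentence and those of its translation. -/
def satStarEquiv (hA : ClosedUnder truth A) (hφ : ∀ i, IsSentence (φ i))
    (S : Set (Fin m → A)) :
    {𝔐 : AModel V A M // ASatVals truth 𝔐 φ S} ≃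
      {𝔑 : CModel V A M // SatSigma A 𝔑 ∧ ∀ ν, csat 𝔑 (mdTransl truth φ S) ν} :=
  (starEquiv.subtypeEquiv (aSatVals_iff_csat_mdTransl hA hφ S)).trans
    (Equiv.subtypeSubtypeEquivSubtypeInter _ fun 𝔑 => ∀ ν, csat 𝔑 (mdTransl truth φ S) ν)

end Transfer

open Filter in
theorem almost_sure_transfer_general [Finite V.Pred] {truth : TruthFns C}
    (hA : ClosedUnder truth A) {m : ℕ} {φ : Fin m → Formula V C} (hφ : ∀ i, IsSentence (φ i))
    (S : Set (Fin m → A)) (l : Filter ℝ) :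
    Tendsto (fun n : ℕ =>
        (Nat.card {𝔐 : AModel V A (Fin n) // ASatVals truth 𝔐 φ S} : ℝ) /
          Nat.card (AModel V A (Fin n))) atTop l ↔
    Tendsto (fun n : ℕ =>
        (Nat.card {𝔑 : CModel V A (Fin n) // SatSigma A 𝔑 ∧
            ∀ ν, csat 𝔑 (mdTransl truth φ S) ν} : ℝ) /
          Nat.card {𝔑 : CModel V A (Fin n) // SatSigma A 𝔑}) atTop l := by
  refine tendsto_congr' ?_
  filter_upwards [eventually_gt_atTop 0] with n hn
  have : Nonempty (Fin n) := Fin.pos_iff_nonempty.1 hn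
  rw [Nat.card_congr (satStarEquiv hA hφ S), Nat.card_congr starEquiv]

open Filter in
/-- **Transfer of almost-sure truth** (Proposition 5.3): an MD-sentence
`⟨φ₁, …, φ_m; S⟩` with sentence components and `S ⊆ A^m` is almost surely
true on `A`-valued models with finite domains `{1, …, n}` iff the classical
sentence `⋁_{(a₁,…,a_m) ∈ S} (T^{a₁}(φ₁) ∧ … ∧ T^{a_m}(φ_m))` is almost
surely true on the finite classical models of `Σ`. -/
theorem almost_sure_transfer
    (V : Vocab) (hVfin : Finite V.Pred) (C : Conns) (truth : TruthFns C)
    (A : Finset UI) (h0 : (0 : UI) ∈ A) (h1 : (1 : UI) ∈ A)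
    (hA : ∀ (c : C.Conn) (b : Fin (C.carity c) → UI),
        (∀ i, b i ∈ A) → truth c b ∈ A)
    (m : ℕ) (φ : Fin m → Formula V C) (hsent : ∀ i, IsSentence (φ i))
    (S : Set (Fin m → ↥A)) :
    Tendsto (fun n : ℕ =>
        ((Nat.card {𝔐 : AModel V A (Fin n) // ASatVals truth 𝔐 φ S} : ℝ) /
          (Nat.card (AModel V A (Fin n)) : ℝ)))
      atTop (nhds 1) ↔
    Tendsto (fun n : ℕ =>
        ((Nat.card {𝔑 : CModel V A (Fin n) // SatSigma A 𝔑 ∧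
            ∀ ν : ℕ → Fin n,
              csat 𝔑 (CFormula.ors ((Set.toFinite S).toFinset.toList.map
                (fun v => CFormula.ands
                  (List.ofFn fun i => transl truth A (φ i) (v i))))) ν} : ℝ) /
          (Nat.card {𝔑 : CModel V A (Fin n) // SatSigma A 𝔑} : ℝ)))
      atTop (nhds 1) := by
  exact almost_sure_transfer_general hA hsent S (nhds 1)

end
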